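/- Three point-vortices on the hyperbolic plane with vanishing momentum are relative equilibria (rigid motion of the shape): Let Γ₁, Γ₂, Γ₃ ∈ ℝ \ {0} and let r₁, r₂, r₃ : ℝ → ℝ³ be differentiable curves solving the point-vortex equations on the hyperbolic plane with N = 3, with rᵢ(0)·_L rᵢ(0) = 1 and third coordinate of rᵢ(0) positive for all i, (rᵢ(t)·_L rⱼ(t))² ≠ 1 for all i ≠ j and all t, and vanishing total linear momentum Γ₁ r₁(0) + Γ₂ r₂(0) + Γ₃ r₃(0) = 0. Then all pairwise Lorentzian pairings are constant in time: rᵢ(t) ·_L rⱼ(t) = rᵢ(0) ·_L rⱼ(0) for all i, j and all t. -/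

import Mathlib

/-!
The total linear momentum `∑ i, Γ i • r i` is conserved because the interaction terms are
antisymmetric in the two vortices. If it vanishes at time `0` it therefore vanishes for all time,
so the three position vectors stay linearly dependent and their triple product
`dotL (crossL r₀ r₁) r₂` is identically zero. The derivative of each pairing `dotL (r i) (r j)`
is a combination of triple products, all of which vanish (either for this reason or because of a
repeated vector), hence every pairing is constant.
-/

open scoped BigOperators

/-- The Lorentzian pairing a ·_L b = -a₁b₁ - a₂b₂ + a₃b₃ on ℝ³, for L = diag(-1,-1,1). -/
noncomputable def dotL (a b : Fin 3 → ℝ) : ℝ := -(a 0 * b 0) - a 1 * b 1 + a 2 * b 2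

/-- The Lorentzian cross product a ×_L b = L (a × b), for L = diag(-1,-1,1). -/
noncomputable def crossL (a b : Fin 3 → ℝ) : Fin 3 → ℝ :=
  ![-(crossProduct a b 0), -(crossProduct a b 1), crossProduct a b 2]

noncomputable def hypRHS (N : ℕ) (Γ : Fin N → ℝ) (r : Fin N → Fin 3 → ℝ) (i : Fin N) :
    Fin 3 → ℝ :=
  (-(1 / Real.pi)) •
    ∑ j ∈ Finset.univ.filter (fun j => j ≠ i),
      (Γ j / ((dotL (r i) (r j)) ^ 2 - 1)) • crossL (r i) (r j)

def IsPVSolutionHyp (N : ℕ) (Γ : Fin N → ℝ) (r : ℝ → Fin N → Fin 3 → ℝ) : Prop :=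
  (∀ t : ℝ, ∀ i j : Fin N, i ≠ j → (dotL (r t i) (r t j)) ^ 2 ≠ 1) ∧
  (∀ (t : ℝ) (i : Fin N), HasDerivAt (fun s => r s i) (hypRHS N Γ (r t) i) t)

lemma hasDerivAt_dotL {f g : ℝ → Fin 3 → ℝ} {f' g' : Fin 3 → ℝ} {t : ℝ}
    (hf : HasDerivAt f f' t) (hg : HasDerivAt g g' t) :
    HasDerivAt (fun s => dotL (f s) (g s)) (dotL f' (g t) + dotL (f t) g') t := by
  have F := hasDerivAt_pi.1 hf
  have G := hasDerivAt_pi.1 hg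
  have h := (((F 0).mul (G 0)).neg.sub ((F 1).mul (G 1))).add ((F 2).mul (G 2))
  refine h.congr_deriv ?_
  simp only [dotL]
  ring

lemma dotL_comm (a b : Fin 3 → ℝ) : dotL a b = dotL b a := by
  simp only [dotL]
  ring

lemma hypRHS_eq (Γ : Fin 3 → ℝ) (r : Fin 3 → Fin 3 → ℝ) (i : Fin 3) :
    hypRHS 3 Γ r i = (-(1 / Real.pi)) •
      ∑ j, (Γ j / ((dotL (r i) (r j)) ^ 2 - 1)) • crossL (r i) (r j) := by
  -- The diagonal term may be included, since `crossL a a = 0`.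
  have hself : crossL (r i) (r i) = 0 := by
    ext k
    fin_cases k <;> simp [crossL]
  rw [hypRHS, Finset.sum_filter_of_ne]
  rintro j - hj rfl
  exact hj (by rw [hself, smul_zero])

/-- Conservation of momentum in infinitesimal form. -/
lemma sum_smul_hypRHS (Γ : Fin 3 → ℝ) (r : Fin 3 → Fin 3 → ℝ) :
    ∑ i, Γ i • hypRHS 3 Γ r i = 0 := by
  simp only [hypRHS_eq, Fin.sum_univ_three, dotL_comm (r 1) (r 0), dotL_comm (r 2) (r 0),
    dotL_comm (r 2) (r 1)]
  ext k
  fin_cases k <;> simp [crossL, cross_apply] <;> ring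

/-- If the triple product of the positions vanishes, the velocity of vortex `i` is `dotL`-orthogonal to every
vortex. -/
lemma dotL_hypRHS_eq_zero (Γ : Fin 3 → ℝ) (r : Fin 3 → Fin 3 → ℝ)
    (hdet : dotL (crossL (r 0) (r 1)) (r 2) = 0) (i k : Fin 3) :
    dotL (hypRHS 3 Γ r i) (r k) = 0 := by
  have htriple : ∀ j, dotL (crossL (r i) (r j)) (r k) = 0 := by
    intro j
    simp only [dotL, crossL, cross_apply] at hdet ⊢
    fin_cases i <;> fin_cases j <;> fin_cases k <;> simp at hdet ⊢ <;>
      first | ring1 | linear_combination hdet | linear_combination -hdet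
  have hlin : dotL (hypRHS 3 Γ r i) (r k) = -(1 / Real.pi) *
      ∑ j, Γ j / ((dotL (r i) (r j)) ^ 2 - 1) * dotL (crossL (r i) (r j)) (r k) := by
    rw [hypRHS_eq]
    simp only [dotL, Fin.sum_univ_three, Pi.smul_apply, Pi.add_apply, smul_eq_mul]
    ring
  rw [hlin]
  simp [htriple]

lemma dotL_crossL_eq_zero (Γ : Fin 3 → ℝ) (hΓ : Γ 2 ≠ 0) (r : Fin 3 → Fin 3 → ℝ)
    (h : ∑ i, Γ i • r i = 0) : dotL (crossL (r 0) (r 1)) (r 2) = 0 := by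
  have hk : ∀ k, Γ 0 * r 0 k + Γ 1 * r 1 k + Γ 2 * r 2 k = 0 := fun k => by
    simpa [Fin.sum_univ_three] using congrFun h k
  apply (mul_eq_zero.1 (?_ : Γ 2 * _ = 0)).resolve_left hΓ
  simp [dotL, crossL, cross_apply, -mul_eq_zero]
  linear_combination (r 0 1 * r 1 2 - r 0 2 * r 1 1) * hk 0
    + (r 0 2 * r 1 0 - r 0 0 * r 1 2) * hk 1 + (r 0 0 * r 1 1 - r 0 1 * r 1 0) * hk 2

theorem hyp_three_vortices_zero_momentum_relative_equilibrium
    (Γ : Fin 3 → ℝ) (hΓ : ∀ i, Γ i ≠ 0)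
    (r : ℝ → Fin 3 → Fin 3 → ℝ) (hsol : IsPVSolutionHyp 3 Γ r)
    (hhyp : ∀ i : Fin 3, dotL (r 0 i) (r 0 i) = 1) (hpos : ∀ i : Fin 3, r 0 i 2 > 0)
    (hmom : ∑ i, Γ i • r 0 i = 0) :
    ∀ (t : ℝ) (i j : Fin 3), dotL (r t i) (r t j) = dotL (r 0 i) (r 0 j) := by
  obtain ⟨-, hd⟩ := hsol
  have hM : ∀ t, HasDerivAt (fun s => ∑ i, Γ i • r s i) 0 t := fun t => by
    rw [← sum_smul_hypRHS Γ (r t)]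
    exact HasDerivAt.fun_sum fun i _ => (hd t i).const_smul (Γ i)
  have hmom_t : ∀ t, ∑ i, Γ i • r t i = 0 := fun t =>
    (is_const_of_deriv_eq_zero (fun s => (hM s).differentiableAt) (fun s => (hM s).deriv) t 0).trans
      hmom
  intro t i j
  have hP : ∀ t, HasDerivAt (fun s => dotL (r s i) (r s j)) 0 t := fun t => by
    have hdet := dotL_crossL_eq_zero Γ (hΓ 2) (r t) (hmom_t t)
    refine (hasDerivAt_dotL (hd t i) (hd t j)).congr_deriv ?_
    rw [dotL_comm (r t i), dotL_hypRHS_eq_zero Γ _ hdet, dotL_hypRHS_eq_zero Γ _ hdet, add_zero]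
  exact is_const_of_deriv_eq_zero (fun s => (hP s).differentiableAt) (fun s => (hP s).deriv) t 0
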